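/- A_4(11,8) ≤ 60 and A_4(12,8) ≤ 240: every code C ⊆ (Fin 4)^{11} with minimum Hamming distance at least 8 has at most 60 elements, and every code C ⊆ (Fin 4)^{12} with minimum Hamming distance at least 8 has at most 240 elements. -/

import Mathlib

open Finset

/-- Number of agreeing coordinates. -/
def agr (u v : Fin 11 → Fin 4) : ℤ := ∑ k, if u k = v k then 1 else 0

/-- Slack of a pair: `3 - agr` off the diagonal, `0` on the diagonal. -/
def slk (u v : Fin 11 → Fin 4) : ℤ := 3 - agr u v + if u = v then 8 else 0

/-- Words of `S` with symbol `a` in column `k`. -/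
def blk (S : Finset (Fin 11 → Fin 4)) (k : Fin 11) (a : Fin 4) : Finset (Fin 11 → Fin 4) :=
  S.filter (fun u => u k = a)

/-- The code property. -/
def IsCd (C : Finset (Fin 11 → Fin 4)) : Prop :=
  ∀ u ∈ C, ∀ v ∈ C, u ≠ v → 8 ≤ hammingDist u v

lemma agr_add_dist (u v : Fin 11 → Fin 4) : agr u v + hammingDist u v = 11 := by
  have h := Finset.card_filter_add_card_filter_not (s := (univ : Finset (Fin 11)))
    (fun k => u k = v k)
  unfold agr hammingDist
  rw [Finset.sum_boole]
  simp only [Finset.card_univ, Fintype.card_fin] at h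
  exact_mod_cast h

lemma agr_self (u : Fin 11 → Fin 4) : agr u u = 11 := by simp [agr]

lemma agr_comm (u v : Fin 11 → Fin 4) : agr u v = agr v u := by simp [agr, eq_comm]

lemma slk_comm (u v : Fin 11 → Fin 4) : slk u v = slk v u := by
  simp [slk, eq_comm, agr_comm u v]

lemma agr_nonneg (u v : Fin 11 → Fin 4) : 0 ≤ agr u v :=
  Finset.sum_nonneg (fun k _ => by split_ifs <;> norm_num)

lemma slk_nonneg {C} (hC : IsCd C) {u v} (hu : u ∈ C) (hv : v ∈ C) : 0 ≤ slk u v := by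
  unfold slk
  by_cases h : u = v
  · subst h; simp [agr_self]
  · have h1 := hC u hu v hv h
    have h2 := agr_add_dist u v
    simp only [h, if_false]
    have : (8 : ℤ) ≤ hammingDist u v := by exact_mod_cast h1
    linarith

lemma sum_split (S : Finset (Fin 11 → Fin 4)) (k : Fin 11)
    (g : (Fin 11 → Fin 4) → ℤ) : ∑ u ∈ S, g u = ∑ a, ∑ u ∈ blk S k a, g u := by
  unfold blk
  exact (Finset.sum_fiberwise S (fun u => u k) g).symm

lemma sum_pair (S : Finset (Fin 11 → Fin 4)) (k : Fin 11)
    (g : (Fin 11 → Fin 4) → (Fin 11 → Fin 4) → ℤ) :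
    ∑ u ∈ S, ∑ v ∈ S, (if u k = v k then g u v else 0) =
      ∑ a, ∑ u ∈ blk S k a, ∑ v ∈ blk S k a, g u v := by
  rw [sum_split S k]
  refine Finset.sum_congr rfl fun a _ => Finset.sum_congr rfl fun u hu => ?_
  have hua : u k = a := (Finset.mem_filter.1 hu).2
  unfold blk
  rw [Finset.sum_filter]
  refine Finset.sum_congr rfl fun v _ => ?_
  simp [hua, eq_comm]

lemma sum_agr_mul (S : Finset (Fin 11 → Fin 4))
    (g : (Fin 11 → Fin 4) → (Fin 11 → Fin 4) → ℤ) :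
    ∑ u ∈ S, ∑ v ∈ S, agr u v * g u v =
      ∑ k, ∑ a, ∑ u ∈ blk S k a, ∑ v ∈ blk S k a, g u v := by
  simp_rw [← sum_pair, agr, Finset.sum_mul, ite_mul, one_mul, zero_mul]
  symm
  rw [Finset.sum_comm]
  refine Finset.sum_congr rfl fun u _ => ?_
  rw [Finset.sum_comm]

lemma sum_agr (S : Finset (Fin 11 → Fin 4)) :
    ∑ u ∈ S, ∑ v ∈ S, agr u v = ∑ k, ∑ a, ((blk S k a).card : ℤ) ^ 2 := by
  have := sum_agr_mul S (fun _ _ => 1)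
  simpa [sq] using this

lemma sum_agr_one (S : Finset (Fin 11 → Fin 4)) (w : Fin 11 → Fin 4) :
    ∑ u ∈ S, agr w u = ∑ k, ((blk S k (w k)).card : ℤ) := by
  unfold agr
  rw [Finset.sum_comm]
  refine Finset.sum_congr rfl fun k _ => ?_
  rw [Finset.sum_boole]
  simp [blk, eq_comm]

lemma sum_slk (S : Finset (Fin 11 → Fin 4)) :
    ∑ u ∈ S, ∑ v ∈ S, slk u v =
      3 * (S.card : ℤ) ^ 2 + 8 * S.card - ∑ k, ∑ a, ((blk S k a).card : ℤ) ^ 2 := by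
  rw [← sum_agr]
  unfold slk
  simp only [Finset.sum_add_distrib, Finset.sum_sub_distrib, Finset.sum_const, Finset.sum_ite_eq]
  have h8 : ∑ x ∈ S, (if x ∈ S then (8 : ℤ) else 0) = ∑ x ∈ S, 8 :=
    Finset.sum_congr rfl (fun x hx => by simp only [hx, if_true])
  rw [h8]
  simp
  ring

lemma card_split (S : Finset (Fin 11 → Fin 4)) (k : Fin 11) :
    (S.card : ℤ) = ∑ a, ((blk S k a).card : ℤ) := by
  have := sum_split S k (fun _ => 1)
  simpa using this

/-- Constant column contribution. -/
lemma blk_const (C : Finset (Fin 11 → Fin 4)) (j : Fin 11) (a : Fin 4) :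
    ∑ b, ((blk (blk C j a) j b).card : ℤ) ^ 2 = ((blk C j a).card : ℤ) ^ 2 := by
  rw [Finset.sum_eq_single a]
  · congr 2
    unfold blk; rw [Finset.filter_filter]; simp
  · intro b _ hb
    have : blk (blk C j a) j b = ∅ := by
      unfold blk; rw [Finset.filter_filter, Finset.filter_eq_empty_iff]
      rintro x _ ⟨h1, h2⟩; exact hb (h2.symm.trans h1)
    simp [this]
  · simp

lemma blk_slk (C : Finset (Fin 11 → Fin 4)) (j : Fin 11) (a : Fin 4) :
    ∑ u ∈ blk C j a, ∑ v ∈ blk C j a, slk u v =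
      2 * ((blk C j a).card : ℤ) ^ 2 + 8 * (blk C j a).card
        - ∑ k ∈ univ.erase j, ∑ b, ((blk (blk C j a) k b).card : ℤ) ^ 2 := by
  rw [sum_slk, ← Finset.add_sum_erase univ _ (Finset.mem_univ j), blk_const]
  ring

lemma sq_bound1 (S : Finset (Fin 11 → Fin 4)) (k : Fin 11) :
    7 * (S.card : ℤ) - 48 ≤ ∑ b, ((blk S k b).card : ℤ) ^ 2 := by
  rw [card_split S k]
  simp only [Fin.sum_univ_four]
  have key : ∀ n : ℤ, 7 * n - 12 ≤ n ^ 2 := by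
    intro n
    rcases le_or_gt n 3 with h | h
    · nlinarith
    · have : 4 ≤ n := h
      nlinarith
  linarith [key (blk S k 0).card, key (blk S k 1).card, key (blk S k 2).card,
    key (blk S k 3).card]

lemma sq_bound2 (S : Finset (Fin 11 → Fin 4)) (k : Fin 11) :
    8 * (S.card : ℤ) - 64 ≤ ∑ b, ((blk S k b).card : ℤ) ^ 2 := by
  rw [card_split S k]
  simp only [Fin.sum_univ_four]
  nlinarith [sq_nonneg (((blk S k 0).card : ℤ) - 4), sq_nonneg (((blk S k 1).card : ℤ) - 4),
    sq_nonneg (((blk S k 2).card : ℤ) - 4), sq_nonneg (((blk S k 3).card : ℤ) - 4)]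

lemma sq_bound3 (S : Finset (Fin 11 → Fin 4)) (k : Fin 11) :
    (S.card : ℤ) ^ 2 ≤ ∑ b, 4 * ((blk S k b).card : ℤ) ^ 2 := by
  rw [card_split S k]
  simp only [Fin.sum_univ_four]
  generalize ((blk S k 0).card : ℤ) = p
  generalize ((blk S k 1).card : ℤ) = q
  generalize ((blk S k 2).card : ℤ) = r
  generalize ((blk S k 3).card : ℤ) = s
  nlinarith [sq_nonneg (p - q), sq_nonneg (p - r), sq_nonneg (p - s), sq_nonneg (q - r),
    sq_nonneg (q - s), sq_nonneg (r - s)]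

lemma card_er (j : Fin 11) : (univ.erase j : Finset (Fin 11)).card = 10 := by simp

lemma blk_slk_nonneg {C} (hC : IsCd C) (j : Fin 11) (a : Fin 4) :
    0 ≤ ∑ u ∈ blk C j a, ∑ v ∈ blk C j a, slk u v :=
  Finset.sum_nonneg fun _ hu => Finset.sum_nonneg fun _ hv =>
    slk_nonneg hC (Finset.mem_filter.1 hu).1 (Finset.mem_filter.1 hv).1

lemma blk_card_le {C} (hC : IsCd C) (j : Fin 11) (a : Fin 4) :
    ((blk C j a).card : ℤ) ≤ 16 := by
  have h0 := blk_slk_nonneg hC j a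
  rw [blk_slk] at h0
  have h1 := Finset.card_nsmul_le_sum (univ.erase j)
    (fun k => ∑ b, 4 * ((blk (blk C j a) k b).card : ℤ) ^ 2) _
    (fun k _ => sq_bound3 (blk C j a) k)
  simp_rw [← Finset.mul_sum] at h1
  rw [card_er, nsmul_eq_mul] at h1
  push_cast at h1
  by_contra hlt
  push Not at hlt
  nlinarith

lemma blk_slk_le (C : Finset (Fin 11 → Fin 4)) (j : Fin 11) (a : Fin 4) :
    ∑ u ∈ blk C j a, ∑ v ∈ blk C j a, slk u v ≤
      2 * (((blk C j a).card : ℤ) - 15) * ((blk C j a).card - 16) := by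
  rw [blk_slk]
  have h1 := Finset.card_nsmul_le_sum (univ.erase j)
    (fun k => ∑ b, ((blk (blk C j a) k b).card : ℤ) ^ 2) _
    (fun k _ => sq_bound1 (blk C j a) k)
  rw [card_er, nsmul_eq_mul] at h1
  push_cast at h1
  nlinarith

lemma total_le {C} (hC : IsCd C) (h61 : C.card = 61) :
    ∑ u ∈ C, ∑ v ∈ C, agr u v * slk u v ≤ 132 := by
  rw [sum_agr_mul]
  have : ∀ k ∈ (univ : Finset (Fin 11)),
      ∑ a, ∑ u ∈ blk C k a, ∑ v ∈ blk C k a, slk u v ≤ 12 := by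
    intro k _
    have hs := card_split C k
    rw [h61] at hs
    simp only [Fin.sum_univ_four] at hs ⊢
    have b0 := blk_slk_le C k 0
    have b1 := blk_slk_le C k 1
    have b2 := blk_slk_le C k 2
    have b3 := blk_slk_le C k 3
    have c0 := blk_card_le hC k 0
    have c1 := blk_card_le hC k 1
    have c2 := blk_card_le hC k 2
    have c3 := blk_card_le hC k 3
    generalize ((blk C k 0).card : ℤ) = p at *
    generalize ((blk C k 1).card : ℤ) = q at *
    generalize ((blk C k 2).card : ℤ) = r at *
    generalize ((blk C k 3).card : ℤ) = s at *
    push_cast at hs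
    have key : ∀ n : ℤ, 13 ≤ n → n ≤ 16 → 2 * (n - 15) * (n - 16) ≤ 4 * (16 - n) := by
      intro n h1 h2
      nlinarith
    linarith [key p (by linarith) c0, key q (by linarith) c1, key r (by linarith) c2,
      key s (by linarith) c3]
  have h := Finset.sum_le_card_nsmul _ _ _ this
  simpa using h

/-- A tight block is balanced in every other column. -/
lemma tight {C} (hC : IsCd C) (j : Fin 11) (a : Fin 4) (h16 : (blk C j a).card = 16)
    (k : Fin 11) (hk : k ≠ j) (b : Fin 4) : ((blk (blk C j a) k b).card : ℤ) = 4 := by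
  have h0 := blk_slk_nonneg hC j a
  rw [blk_slk, h16] at h0
  have hk' : k ∈ univ.erase j := by simp [hk]
  rw [← Finset.add_sum_erase _ _ hk'] at h0
  have h1 := Finset.card_nsmul_le_sum ((univ.erase j).erase k)
    (fun k => ∑ b, ((blk (blk C j a) k b).card : ℤ) ^ 2) _
    (fun k _ => sq_bound2 (blk C j a) k)
  rw [Finset.card_erase_of_mem hk', card_er, nsmul_eq_mul, h16] at h1
  have hs := card_split (blk C j a) k
  rw [h16] at hs
  have hz : ∑ c, (((blk (blk C j a) k c).card : ℤ) - 4) ^ 2 ≤ 0 := by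
    simp only [Fin.sum_univ_four] at hs h0 h1 ⊢
    push_cast at h0 h1 hs
    nlinarith
  have h2 := Finset.single_le_sum (f := fun c => (((blk (blk C j a) k c).card : ℤ) - 4) ^ 2)
    (fun c _ => sq_nonneg _) (Finset.mem_univ b)
  have h3 : (((blk (blk C j a) k b).card : ℤ) - 4) ^ 2 = 0 :=
    le_antisymm (h2.trans hz) (sq_nonneg _)
  have := pow_eq_zero_iff (two_ne_zero) |>.1 h3
  linarith

lemma outside {C} (hC : IsCd C) (j : Fin 11) (a : Fin 4) (h16 : (blk C j a).card = 16)
    (w : Fin 11 → Fin 4) (hw : w ∈ C) (hwa : w j ≠ a) :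
    2 ≤ ∑ b ∈ blk C j a, agr w b * slk w b := by
  have hmem : ∀ b ∈ blk C j a, b ∈ C ∧ w ≠ b := by
    intro b hb
    obtain ⟨h1, h2⟩ := Finset.mem_filter.1 hb
    exact ⟨h1, fun h => hwa (h ▸ h2)⟩
  have hslk : ∀ b ∈ blk C j a, slk w b = 3 - agr w b := by
    intro b hb; simp [slk, (hmem b hb).2]
  have hnn : ∀ b ∈ blk C j a, 0 ≤ agr w b * slk w b := fun b hb =>
    mul_nonneg (agr_nonneg _ _) (slk_nonneg hC hw (hmem b hb).1)
  have hsum : ∑ b ∈ blk C j a, agr w b = 40 := by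
    rw [sum_agr_one, ← Finset.add_sum_erase univ _ (Finset.mem_univ j)]
    have he : blk (blk C j a) j (w j) = ∅ := by
      unfold blk; rw [Finset.filter_filter, Finset.filter_eq_empty_iff]
      rintro x _ ⟨h1, h2⟩; exact hwa (h2.symm.trans h1)
    rw [he, Finset.sum_congr rfl (g := fun _ => (4 : ℤ))
      (fun k hk => tight hC j a h16 k (Finset.ne_of_mem_erase hk) _)]
    simp
  have hex : ∃ b ∈ blk C j a, ¬ (3 ∣ agr w b) := by
    by_contra hcon
    push Not at hcon
    have := Finset.dvd_sum hcon
    rw [hsum] at this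
    norm_num at this
  obtain ⟨b, hb, hb3⟩ := hex
  refine le_trans ?_ (Finset.single_le_sum hnn hb)
  have h0 := agr_nonneg w b
  have h3 := slk_nonneg hC hw (hmem b hb).1
  rw [hslk b hb] at h3 ⊢
  generalize agr w b = x at *
  have : x ≤ 3 := by linarith
  interval_cases x <;> simp_all

lemma no61 {C} (hC : IsCd C) (h61 : C.card = 61) : False := by
  have hs := card_split C 0
  rw [h61] at hs
  obtain ⟨a, ha⟩ : ∃ a, (blk C 0 a).card = 16 := by
    by_contra hcon
    push Not at hcon
    simp only [Fin.sum_univ_four] at hs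
    have := blk_card_le hC 0 0
    have := blk_card_le hC 0 1
    have := blk_card_le hC 0 2
    have := blk_card_le hC 0 3
    have := hcon 0
    have := hcon 1
    have := hcon 2
    have := hcon 3
    omega
  have ht := total_le hC h61
  set f := fun u v => agr u v * slk u v with hf
  have hnn : ∀ u ∈ C, ∀ v ∈ C, 0 ≤ f u v := fun u hu v hv =>
    mul_nonneg (agr_nonneg _ _) (slk_nonneg hC hu hv)
  set D := C.filter (fun u => ¬ u 0 = a) with hD
  have hDC : ∀ u ∈ D, u ∈ C := fun u hu => (Finset.mem_filter.1 hu).1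
  have hBC : ∀ u ∈ blk C 0 a, u ∈ C := fun u hu => (Finset.mem_filter.1 hu).1
  have hsp : ∀ g : (Fin 11 → Fin 4) → ℤ, ∑ u ∈ C, g u = ∑ u ∈ blk C 0 a, g u + ∑ u ∈ D, g u :=
    fun g => (Finset.sum_filter_add_sum_filter_not C (fun u => u 0 = a) g).symm
  have hDcard : D.card = 45 := by
    have := hsp (fun _ => 1)
    simp [h61, ha] at this
    omega
  have hlow : 90 ≤ ∑ u ∈ D, ∑ v ∈ blk C 0 a, f u v := by
    have := Finset.card_nsmul_le_sum D (fun u => ∑ v ∈ blk C 0 a, f u v) 2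
      (fun u hu => outside hC 0 a ha u (hDC u hu) (Finset.mem_filter.1 hu).2)
    rw [hDcard] at this
    simpa using this
  have hlow2 : ∑ u ∈ blk C 0 a, ∑ v ∈ D, f u v = ∑ u ∈ D, ∑ v ∈ blk C 0 a, f u v := by
    rw [Finset.sum_comm]
    refine Finset.sum_congr rfl fun u _ => Finset.sum_congr rfl fun v _ => ?_
    simp only [hf, agr_comm u v, slk_comm u v]
  have e : ∑ u ∈ C, ∑ v ∈ C, f u v =
      ∑ u ∈ blk C 0 a, ∑ v ∈ blk C 0 a, f u v + ∑ u ∈ blk C 0 a, ∑ v ∈ D, f u v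
      + (∑ u ∈ D, ∑ v ∈ blk C 0 a, f u v + ∑ u ∈ D, ∑ v ∈ D, f u v) := by
    rw [hsp, ← Finset.sum_add_distrib, ← Finset.sum_add_distrib]
    simp_rw [← hsp]
  have p1 : 0 ≤ ∑ u ∈ blk C 0 a, ∑ v ∈ blk C 0 a, f u v :=
    Finset.sum_nonneg fun u hu => Finset.sum_nonneg fun v hv => hnn u (hBC u hu) v (hBC v hv)
  have p2 : 0 ≤ ∑ u ∈ D, ∑ v ∈ D, f u v :=
    Finset.sum_nonneg fun u hu => Finset.sum_nonneg fun v hv => hnn u (hDC u hu) v (hDC v hv)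
  linarith

lemma bound11 (C : Finset (Fin 11 → Fin 4)) (hC : IsCd C) : C.card ≤ 60 := by
  by_contra h
  obtain ⟨T, hT, h61⟩ := Finset.exists_subset_card_eq (show 61 ≤ C.card by omega)
  exact no61 (C := T) (fun u hu v hv => hC u (hT hu) v (hT hv)) h61

lemma dist_tail (u v : Fin 12 → Fin 4) (h : u 0 = v 0) :
    hammingDist u v = hammingDist (Fin.tail u) (Fin.tail v) := by
  unfold hammingDist
  rw [Fin.card_filter_univ_succ]
  simp only [h, Fin.tail, ne_eq, not_true_eq_false, if_false, zero_add]
  congr!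

lemma bound12 (C : Finset (Fin 12 → Fin 4))
    (hC : ∀ u ∈ C, ∀ v ∈ C, u ≠ v → 8 ≤ hammingDist u v) : C.card ≤ 240 := by
  have hb : ∀ a ∈ (univ : Finset (Fin 4)), (C.filter (fun u => u 0 = a)).card ≤ 60 := by
    intro a _
    have inj : Set.InjOn (Fin.tail : (Fin 12 → Fin 4) → (Fin 11 → Fin 4))
        (C.filter (fun u => u 0 = a)) := by
      intro u hu v hv h
      have hu2 := (Finset.mem_filter.1 hu).2
      have hv2 := (Finset.mem_filter.1 hv).2
      rw [← Fin.cons_self_tail u, ← Fin.cons_self_tail v, h, hu2, hv2]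
    rw [← Finset.card_image_of_injOn inj]
    apply bound11
    intro x hx y hy hxy
    obtain ⟨u, hu, rfl⟩ := Finset.mem_image.1 hx
    obtain ⟨v, hv, rfl⟩ := Finset.mem_image.1 hy
    obtain ⟨hu1, hu2⟩ := Finset.mem_filter.1 hu
    obtain ⟨hv1, hv2⟩ := Finset.mem_filter.1 hv
    rw [← dist_tail u v (hu2.trans hv2.symm)]
    exact hC u hu1 v hv1 (fun h => hxy (h ▸ rfl))
  have h := Finset.card_eq_sum_card_fiberwise (f := fun u : Fin 12 → Fin 4 => u 0) (s := C)
    (t := univ) (by intro x _; simp)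
  rw [h]
  have := Finset.sum_le_card_nsmul _ _ _ hb
  simpa using this

/-- `A_4(11,8) ≤ 60` and `A_4(12,8) ≤ 240`. -/
theorem A4_11_8_and_A4_12_8 :
    (∀ C : Finset (Fin 11 → Fin 4),
      (∀ u ∈ C, ∀ v ∈ C, u ≠ v → 8 ≤ hammingDist u v) → C.card ≤ 60)
    ∧ (∀ C : Finset (Fin 12 → Fin 4),
      (∀ u ∈ C, ∀ v ∈ C, u ≠ v → 8 ≤ hammingDist u v) → C.card ≤ 240) := by
  exact ⟨fun C hC => bound11 C hC, bound12⟩
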